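/- Let π: (X,B,μ,T) → (Z,A,λ,R) be a factor map between invertible Lebesgue systems and P_μ(π) the relative Pinsker σ-algebra of (X,B,μ,T) with respect to π. Then for every finite measurable partition α of X, lim_{m→∞} h_μ(T^m, α | π⁻¹(A)) = H_μ(α | P_μ(π)). -/

import Mathlib

/-!
Write `C = π⁻¹(A)`, which is a `T`-invariant σ-algebra, and encode a partition `α` as the fibres of
a finite-valued map `f`. The chain rule `funH_prod` and the increasing martingale theorem give the
closed form `h_μ(T, α | C) = H_μ(α | C ∨ ⋁_{i≥1} T⁻ⁱα)` (`hPartCond_eq_rate`), called `rate` below.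
All standard properties of relative entropy used here follow from it: monotonicity, subadditivity,
continuity in the partition (`rate_le_add`) and `h(T^m, α | C) ≤ m h(T, α | C)`.

Sets `s` for which `{s, sᶜ}` has zero entropy form a σ-algebra, which therefore is the relative
Pinsker algebra `P` (`measurableSet_relPinsker`).

*Upper bound.* If `β` is a finite partition by sets of `P`, then `h(T^m, β | C) = 0` and so
`h(T^m, α | C) ≤ H(α | β)`. Letting `β` increase along countably many sets of `P` that determine the
conditional probabilities `μ(A | P)`, `A ∈ α`, yields `h(T^m, α | C) ≤ H(α | P)`
(`rate_iterate_le_relPinsker`).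

*Lower bound.* The closed form for `T^m` gives `h(T^m, α | C) ≥ H(α | C ∨ ⋁_{i≥m} T⁻ⁱα)`. By the
reverse martingale theorem (`tendsto_setH_tailAlg`) the right side converges to `H(α | D)`, where
`D` is the tail of these σ-algebras, taken modulo null sets. If `γ` is a finite `D`-measurable
partition, then `h(γ) + h(α) ≤ h(α ∨ γ) ≤ h(α)`, hence `h(γ) = 0` (`rate_eq_zero_of_tail`).
So `D ⊆ P` and `H(α | D) ≥ H(α | P)`. Both bounds together prove the limit, and the completion in
the definition of `D` makes any exchange of intersections and joins of σ-algebras unnecessary.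
-/

open MeasureTheory Filter Set Topology

section EntropyCore

variable {X : Type*}

/-- Conditional entropy `H_μ(α | C)` of a finite family of sets given a sub-σ-algebra `C`. -/
noncomputable def condH {m0 : MeasurableSpace X} (μ : Measure X) {ι : Type*} [Fintype ι]
    (α : ι → Set X) (C : MeasurableSpace X) : ℝ :=
  ∑ i, ∫ x, Real.negMulLog ((μ[(α i).indicator (fun _ => (1:ℝ)) | C]) x) ∂μ

/-- Plain entropy `H_μ(α)` of a finite family of sets. -/
noncomputable def plainH {m0 : MeasurableSpace X} (μ : Measure X) {ι : Type*} [Fintype ι]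
    (α : ι → Set X) : ℝ :=
  ∑ i, Real.negMulLog (μ (α i)).toReal

/-- Atoms of the dynamical join `⋁_{i=0}^{n-1} T^{-i} α`. -/
def joinAtoms (T : X → X) {ι : Type*} (α : ι → Set X) (n : ℕ) : (Fin n → ι) → Set X :=
  fun s => ⋂ i : Fin n, (T^[(i : ℕ)]) ⁻¹' α (s i)

/-- Conditional dynamical entropy `h_μ(T, α | C)` of a finite family `α`
(as the infimum, which coincides with the defining limit, of `(1/n) H_μ(⋁_{i<n} T^{-i}α | C)`). -/
noncomputable def hPartCond {m0 : MeasurableSpace X} (μ : Measure X) (T : X → X)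
    {ι : Type*} [Fintype ι] (α : ι → Set X) (C : MeasurableSpace X) : ℝ :=
  ⨅ n : ℕ, (1 / (n + 1 : ℝ)) * condH μ (joinAtoms T α (n + 1)) C

/-- Dynamical entropy `h_μ(T, α)` of a finite family `α`. -/
noncomputable def hPart {m0 : MeasurableSpace X} (μ : Measure X) (T : X → X)
    {ι : Type*} [Fintype ι] (α : ι → Set X) : ℝ :=
  ⨅ n : ℕ, (1 / (n + 1 : ℝ)) * plainH μ (joinAtoms T α (n + 1))

/-- A finite measurable partition of `X` (with respect to the σ-algebra `m`). -/
structure FinPart (X : Type*) (m : MeasurableSpace X) where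
  k : ℕ
  atom : Fin k → Set X
  meas : ∀ i, MeasurableSet[m] (atom i)
  disj : ∀ i j, i ≠ j → Disjoint (atom i) (atom j)
  cover : ⋃ i, atom i = Set.univ

/-- Conditional (measure-theoretic) entropy `h_μ(T | C)`. -/
noncomputable def hCond {m0 : MeasurableSpace X} (μ : Measure X) (T : X → X)
    (C : MeasurableSpace X) : ℝ :=
  ⨆ α : FinPart X m0, hPartCond μ T α.atom C

end EntropyCore

section Pinsker

variable {X : Type*}

/-- Two σ-algebras agree mod `μ` if every set of one differs from a set
of the other by a `μ`-null set. -/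
def EqModMeasure {m0 : MeasurableSpace X} (μ : Measure X)
    (m₁ m₂ : MeasurableSpace X) : Prop :=
  (∀ s : Set X, MeasurableSet[m₁] s →
    ∃ t : Set X, MeasurableSet[m₂] t ∧ μ ((s \ t) ∪ (t \ s)) = 0) ∧
  (∀ s : Set X, MeasurableSet[m₂] s →
    ∃ t : Set X, MeasurableSet[m₁] t ∧ μ ((s \ t) ∪ (t \ s)) = 0)

/-- The relative Pinsker σ-algebra `P_μ(π)` of `(X,B,μ,T)` relative to a sub-σ-algebra `C`:
the smallest sub-σ-algebra containing every finite partition `α` with `h_μ(T, α | C) = 0`. -/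
noncomputable def relPinsker {m0 : MeasurableSpace X} (μ : Measure X) (T : X → X)
    (C : MeasurableSpace X) : MeasurableSpace X :=
  MeasurableSpace.generateFrom
    {s : Set X | ∃ α : FinPart X m0, hPartCond μ T α.atom C = 0 ∧ ∃ i, α.atom i = s}

end Pinsker

set_option linter.unusedSectionVars false

/-! ### Conditional probabilities and martingale convergence -/

section CondProb

variable {X : Type*} {C C₁ C₂ : MeasurableSpace X} {mX : MeasurableSpace X}
  {μ : Measure X} [IsProbabilityMeasure μ]

/-- Conditional probability `μ(s | C)`. -/
noncomputable def condProb {mX : MeasurableSpace X} (μ : Measure X) (s : Set X)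
    (C : MeasurableSpace X) : X → ℝ :=
  μ[s.indicator (fun _ => (1 : ℝ)) | C]

/-- The contribution `∫ -μ(s | C) log μ(s | C) dμ` of a single set to a conditional entropy. -/
noncomputable def setH {mX : MeasurableSpace X} (μ : Measure X) (s : Set X)
    (C : MeasurableSpace X) : ℝ :=
  ∫ x, Real.negMulLog (condProb μ s C x) ∂μ

lemma integrable_ind {s : Set X} (hs : MeasurableSet s) :
    Integrable (s.indicator (fun _ => (1 : ℝ))) μ :=
  (integrable_const _).indicator hs

lemma condProb_nonneg (s : Set X) :
    ∀ᵐ x ∂μ, 0 ≤ condProb μ s C x :=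
  condExp_nonneg (Eventually.of_forall fun x => Set.indicator_nonneg (by simp) x)

lemma condProb_le {s t : Set X} (hs : MeasurableSet s) (ht : MeasurableSet t) (hst : s ⊆ t) :
    ∀ᵐ x ∂μ, condProb μ s C x ≤ condProb μ t C x :=
  condExp_mono (integrable_ind hs) (integrable_ind ht)
    (Eventually.of_forall fun x => Set.indicator_le_indicator_of_subset hst (fun _ => zero_le_one) x)

lemma condProb_mem (hC : C ≤ mX) {s : Set X} (hs : MeasurableSet s) :
    ∀ᵐ x ∂μ, condProb μ s C x ∈ Set.Icc (0 : ℝ) 1 := by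
  have h1 : condProb μ univ C = fun _ => (1 : ℝ) := by
    simp only [condProb, Set.indicator_univ]
    exact condExp_const hC 1
  filter_upwards [condProb_nonneg (C := C) (μ := μ) s,
    condProb_le (C := C) (μ := μ) hs MeasurableSet.univ (subset_univ s)] with x h0 h2
  rw [h1] at h2
  exact ⟨h0, h2⟩

lemma negMulLog_bound {y : ℝ} (hy : y ∈ Set.Icc (0 : ℝ) 1) : ‖Real.negMulLog y‖ ≤ 1 := by
  rw [Real.norm_of_nonneg (Real.negMulLog_nonneg hy.1 hy.2)]
  have := Real.negMulLog_le_one_sub_self hy.1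
  linarith [hy.1]

lemma integrable_negMulLog {f : X → ℝ} (hf : AEStronglyMeasurable f μ)
    (h : ∀ᵐ x ∂μ, f x ∈ Set.Icc (0 : ℝ) 1) : Integrable (fun x => Real.negMulLog (f x)) μ :=
  Integrable.of_bound (Real.continuous_negMulLog.comp_aestronglyMeasurable hf) 1
    (h.mono fun _ => negMulLog_bound)

lemma aesm_condProb (hC : C ≤ mX) (s : Set X) : AEStronglyMeasurable (condProb μ s C) μ :=
  (stronglyMeasurable_condExp.mono hC).aestronglyMeasurable

lemma setH_nonneg (hC : C ≤ mX) {s : Set X} (hs : MeasurableSet s) : 0 ≤ setH μ s C :=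
  integral_nonneg_of_ae ((condProb_mem hC hs).mono fun _ h => Real.negMulLog_nonneg h.1 h.2)

/-- Tower property, where the smaller σ-algebra only needs to be contained in the larger one
up to null sets. -/
lemma condExp_condExp_of_le_ae (h₁ : C₁ ≤ mX) (h₂ : C₂ ≤ mX)
    (h : C₁ ≤ eventuallyMeasurableSpace C₂ (ae μ)) {f : X → ℝ} (hf : Integrable f μ) :
    μ[μ[f | C₂] | C₁] =ᵐ[μ] μ[f | C₁] := by
  refine ae_eq_condExp_of_forall_setIntegral_eq h₁ hf
    (fun s _ _ => integrable_condExp.integrableOn) (fun s hs _ => ?_)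
    stronglyMeasurable_condExp.aestronglyMeasurable
  obtain ⟨t, ht, hst⟩ := h s hs
  rw [setIntegral_condExp h₁ integrable_condExp hs, setIntegral_congr_set hst,
    setIntegral_condExp h₂ hf ht, setIntegral_congr_set hst]

lemma setH_anti (h₁ : C₁ ≤ mX) (h₂ : C₂ ≤ mX)
    (h : C₁ ≤ eventuallyMeasurableSpace C₂ (ae μ)) {s : Set X} (hs : MeasurableSet s) :
    setH μ s C₂ ≤ setH μ s C₁ := by
  have hmem := condProb_mem (μ := μ) h₂ hs
  have hint := integrable_negMulLog (aesm_condProb (μ := μ) h₂ s) hmem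
  have J := Real.concaveOn_negMulLog.subset Set.Icc_subset_Ici_self (convex_Icc (0 : ℝ) 1)
    |>.condExp_map_le (μ := μ) h₁ (Real.continuous_negMulLog.upperSemicontinuous.upperSemicontinuousOn _)
    hmem isClosed_Icc integrable_condExp hint
  have T := condExp_condExp_of_le_ae h₁ h₂ h (integrable_ind (μ := μ) hs)
  unfold setH
  rw [← integral_condExp h₁]
  refine integral_mono_ae integrable_condExp
    (integrable_negMulLog (aesm_condProb h₁ s) (condProb_mem h₁ hs)) ?_
  filter_upwards [J, T] with x hJ hT
  refine hJ.trans (le_of_eq ?_)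
  simp only [Function.comp]
  exact congrArg _ hT

lemma condProb_of_mem (hC : C ≤ mX) {s : Set X}
    (h : MeasurableSet[eventuallyMeasurableSpace C (ae μ)] s) :
    condProb μ s C =ᵐ[μ] s.indicator (fun _ => (1 : ℝ)) := by
  obtain ⟨t, ht, hst⟩ := h
  have e : s.indicator (fun _ => (1 : ℝ)) =ᵐ[μ] t.indicator (fun _ => (1 : ℝ)) :=
    indicator_ae_eq_of_ae_eq_set hst
  refine (condExp_congr_ae e).trans (EventuallyEq.trans (Eq.eventuallyEq ?_) e.symm)
  exact condExp_of_stronglyMeasurable hC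
    (StronglyMeasurable.indicator (@stronglyMeasurable_const _ _ C _ _) ht)
    (integrable_ind (hC _ ht))

lemma setH_of_mem (hC : C ≤ mX) {s : Set X}
    (h : MeasurableSet[eventuallyMeasurableSpace C (ae μ)] s) : setH μ s C = 0 := by
  refine integral_eq_zero_of_ae ?_
  filter_upwards [condProb_of_mem hC h] with x hx
  rw [hx]
  by_cases hxs : x ∈ s <;> simp [hxs]

lemma tendsto_setH {A : ℕ → MeasurableSpace X} (hA : ∀ n, A n ≤ mX) {s : Set X} (hs : MeasurableSet s)
    (h : TendstoInMeasure μ (fun n => condProb μ s (A n)) atTop (condProb μ s C)) :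
    Tendsto (fun n => setH μ s (A n)) atTop (𝓝 (setH μ s C)) := by
  refine tendsto_of_subseq_tendsto fun ns hns => ?_
  obtain ⟨ms, _, hms⟩ := TendstoInMeasure.exists_seq_tendsto_ae
    (f := fun n => condProb μ s (A (ns n))) (fun ε hε => (h ε hε).comp hns)
  refine ⟨ms, tendsto_integral_of_dominated_convergence (fun _ => (1 : ℝ)) (fun n => ?_)
    (integrable_const _) (fun n => ?_) ?_⟩
  · exact Real.continuous_negMulLog.comp_aestronglyMeasurable (aesm_condProb (hA _) s)
  · exact (condProb_mem (hA _) hs).mono fun _ => negMulLog_bound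
  · filter_upwards [hms] with x hx
    exact (Real.continuous_negMulLog.tendsto _).comp hx

lemma tendsto_setH_iSup {A : ℕ → MeasurableSpace X} (hA : ∀ n, A n ≤ mX) (hmono : Monotone A)
    {s : Set X} (hs : MeasurableSet s) :
    Tendsto (fun n => setH μ s (A n)) atTop (𝓝 (setH μ s (⨆ n, A n))) := by
  refine tendsto_setH hA hs
    (tendstoInMeasure_of_tendsto_ae (fun n => aesm_condProb (hA n) s) ?_)
  exact tendsto_ae_condExp (ℱ := ⟨A, hmono, hA⟩) _

/-- The tail of a sequence of σ-algebras: the measurable sets that belong, up to a null set, to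
each member of the sequence. -/
@[reducible]
def tailAlg {mX : MeasurableSpace X} (μ : Measure X) (A : ℕ → MeasurableSpace X) :
    MeasurableSpace X :=
  mX ⊓ ⨅ n, @eventuallyMeasurableSpace X (A n) (ae μ) _

lemma measurableSet_tailAlg {A : ℕ → MeasurableSpace X} {s : Set X} :
    MeasurableSet[tailAlg μ A] s ↔
      MeasurableSet s ∧ ∀ n, MeasurableSet[eventuallyMeasurableSpace (A n) (ae μ)] s := by
  simp [MeasurableSpace.measurableSet_inf, MeasurableSpace.measurableSet_iInf]

/-- Reverse martingale convergence: orthogonal projections onto a decreasing sequence of closed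
subspaces of `L²` converge to the projection onto the intersection. -/
lemma tendsto_setH_tailAlg {A : ℕ → MeasurableSpace X} (hA : ∀ n, A n ≤ mX) (hanti : Antitone A)
    {s : Set X} (hs : MeasurableSet s) :
    Tendsto (fun n => setH μ s (A n)) atTop (𝓝 (setH μ s (tailAlg μ A))) := by
  have hD : tailAlg μ A ≤ mX := inf_le_left
  have hL : MemLp (s.indicator (fun _ => (1 : ℝ))) 2 μ := (memLp_const _).indicator hs
  have hF : ∀ n, Fact (A n ≤ mX) := fun n => ⟨hA n⟩
  let K : ℕ → Submodule ℝ (Lp ℝ 2 μ) := fun n => lpMeas ℝ ℝ (A n) 2 μ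
  have : ∀ n, (K n).HasOrthogonalProjection := fun n => by
    show (lpMeas ℝ ℝ (A n) 2 μ).HasOrthogonalProjection
    infer_instance
  have hK : Antitone K := fun i j hij f hf => by
    rw [mem_lpMeas_iff_aestronglyMeasurable] at hf ⊢
    exact hf.mono (hanti hij)
  have hlim := Submodule.starProjection_tendsto_closure_iSup (fun n => (K n)ᗮ)
    (fun i j hij => Submodule.orthogonal_le (hK hij)) hL.toLp
  obtain ⟨y, hy⟩ : ∃ y, Tendsto (fun n => (K n).starProjection hL.toLp) atTop (𝓝 y) := by
    refine ⟨_, ((tendsto_const_nhds (x := hL.toLp)).sub hlim).congr fun n => ?_⟩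
    simp [Submodule.starProjection_orthogonal']
  have hfm : ∀ n, ((K n).starProjection hL.toLp : X → ℝ) =ᵐ[μ] condProb μ s (A n) := fun n =>
    hL.condExpL2_ae_eq_condExp (𝕜 := ℝ) (hA n)
  have hyK : ∀ n, y ∈ K n := fun n => by
    have hcl : IsClosed (K n : Set (Lp ℝ 2 μ)) := by
      rw [← Submodule.orthogonal_orthogonal (K n)]
      exact Submodule.isClosed_orthogonal _
    refine hcl.mem_of_tendsto hy (eventually_atTop.2 ⟨n, fun k hk => hK hk ?_⟩)
    exact Submodule.starProjection_apply_mem _ _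
  have hym : StronglyMeasurable[tailAlg μ A] y := by
    refine Measurable.stronglyMeasurable (measurable_of_Iio fun c => ?_)
    refine measurableSet_tailAlg.2 ⟨(Lp.stronglyMeasurable y).measurable measurableSet_Iio,
      fun n => ?_⟩
    have := (mem_lpMeas_iff_aestronglyMeasurable).1 (hyK n)
    refine ⟨this.mk y ⁻¹' Iio c, this.stronglyMeasurable_mk.measurable measurableSet_Iio, ?_⟩
    filter_upwards [this.ae_eq_mk] with x hx
    have : (y x < c) = (this.mk y x < c) := by rw [hx]
    exact this
  have hmeas : TendstoInMeasure μ (fun n => condProb μ s (A n)) atTop y :=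
    (tendstoInMeasure_of_tendsto_Lp hy).congr_left hfm
  -- `y` integrates like the indicator of `s` over tail sets, since every projection does.
  have hyD : (y : X → ℝ) =ᵐ[μ] condProb μ s (tailAlg μ A) := by
    have hyi : Integrable (y : X → ℝ) μ := (Lp.memLp y).integrable one_le_two
    refine ae_eq_condExp_of_forall_setIntegral_eq hD (integrable_ind hs)
      (fun _ _ _ => hyi.integrableOn) (fun t ht _ => ?_) hym.aestronglyMeasurable
    have hc : ∀ n, ∫ x in t, ((K n).starProjection hL.toLp) x ∂μ
        = ∫ x in t, s.indicator (fun _ => (1 : ℝ)) x ∂μ := fun n => by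
      obtain ⟨t', ht', htt⟩ := (measurableSet_tailAlg.1 ht).2 n
      rw [setIntegral_congr_set htt, setIntegral_congr_set htt,
        ← setIntegral_condExp (hA n) (integrable_ind hs) ht']
      exact integral_congr_ae (ae_restrict_of_ae (hfm n))
    have h1 : Tendsto (fun n => ∫ x in t, ((K n).starProjection hL.toLp) x ∂μ) atTop
        (𝓝 (∫ x in t, y x ∂μ)) := by
      have hi := fun f : Lp ℝ 2 μ =>
        L2.inner_indicatorConstLp_one (𝕜 := ℝ) (hD _ ht) (measure_ne_top μ t) f
      simp only [← hi]
      exact tendsto_const_nhds.inner hy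
    exact tendsto_nhds_unique h1 (by simp only [hc]; exact tendsto_const_nhds)
  exact tendsto_setH hA hs (hmeas.congr_right hyD)

end CondProb

/-! ### Conditional entropy of finite partitions -/

section Entropy

variable {X ι κ : Type*} {C C₁ C₂ : MeasurableSpace X} {mX : MeasurableSpace X}
  {μ : Measure X} [IsProbabilityMeasure μ]
  [Fintype ι] [MeasurableSpace ι] [MeasurableSingletonClass ι]
  [Fintype κ] [MeasurableSpace κ] [MeasurableSingletonClass κ]

/-- Conditional entropy `H_μ(f | C)` of the partition of `X` into the fibres of `f : X → ι`.
Partitions are encoded by finite-valued functions throughout the proof. -/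
noncomputable def funH {mX : MeasurableSpace X} (μ : Measure X) (f : X → ι)
    (C : MeasurableSpace X) : ℝ :=
  ∑ i, setH μ (f ⁻¹' {i}) C

/-- The σ-algebra generated by a function. -/
abbrev sig {X ι : Type*} [m : MeasurableSpace ι] (f : X → ι) : MeasurableSpace X := m.comap f

lemma fib {f : X → ι} (hf : Measurable f) (i : ι) : MeasurableSet (f ⁻¹' {i}) :=
  hf (measurableSet_singleton i)

lemma fib_sig (f : X → ι) (i : ι) : MeasurableSet[sig f] (f ⁻¹' {i}) :=
  ⟨_, measurableSet_singleton i, rfl⟩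

lemma exists_inter_eq {f : X → ι} {B : Set X} (hB : MeasurableSet[C ⊔ sig f] B) (i : ι) :
    ∃ B', MeasurableSet[C] B' ∧ B ∩ f ⁻¹' {i} = B' ∩ f ⁻¹' {i} := by
  let M : MeasurableSpace X :=
    { MeasurableSet' := fun B => ∃ B', MeasurableSet[C] B' ∧ B ∩ f ⁻¹' {i} = B' ∩ f ⁻¹' {i}
      measurableSet_empty := ⟨∅, MeasurableSet.empty, rfl⟩
      measurableSet_compl := by
        rintro s ⟨t, ht, h⟩
        refine ⟨tᶜ, ht.compl, ?_⟩
        ext x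
        have := Set.ext_iff.1 h x
        simp only [mem_inter_iff, mem_compl_iff] at this ⊢
        tauto
      measurableSet_iUnion := by
        intro s hs
        choose t ht h using hs
        exact ⟨⋃ n, t n, MeasurableSet.iUnion ht, by simp only [iUnion_inter, h]⟩ }
  have h1 : C ≤ M := fun s hs => ⟨s, hs, rfl⟩
  have h2 : sig f ≤ M := by
    rintro _ ⟨u, -, rfl⟩
    by_cases hi : i ∈ u
    · refine ⟨univ, @MeasurableSet.univ X C, ?_⟩
      ext x
      simp only [mem_inter_iff, mem_preimage, mem_singleton_iff, mem_univ, true_and,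
        and_iff_right_iff_imp]
      rintro rfl
      exact hi
    · refine ⟨∅, @MeasurableSet.empty X C, ?_⟩
      ext x
      simp only [mem_inter_iff, mem_preimage, mem_singleton_iff, mem_empty_iff_false, false_and,
        iff_false, not_and]
      rintro h rfl
      exact hi h
  exact (sup_le h1 h2) B hB

lemma integral_mul_condProb (hC : C ≤ mX) {A : Set X} (hA : MeasurableSet A) {q : X → ℝ}
    (hq : StronglyMeasurable[C] q) (hq1 : ∀ᵐ x ∂μ, ‖q x‖ ≤ 1) :
    ∫ x, A.indicator q x ∂μ = ∫ x, q x * condProb μ A C x ∂μ := by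
  have h := condExp_stronglyMeasurable_mul_of_bound hC hq (integrable_ind (μ := μ) hA) 1 hq1
  have e : A.indicator q = q * A.indicator (fun _ => (1 : ℝ)) := by
    ext x
    by_cases hx : x ∈ A <;> simp [hx]
  rw [e, ← integral_condExp hC]
  exact integral_congr_ae h

/-- The ratio `μ(A ∩ t | C) / μ(A | C)`. -/
noncomputable def ratio {mX : MeasurableSpace X} (μ : Measure X) (A t : Set X)
    (C : MeasurableSpace X) : X → ℝ :=
  fun x => condProb μ (A ∩ t) C x / condProb μ A C x

lemma stronglyMeasurable_ratio (A t : Set X) : StronglyMeasurable[C] (ratio μ A t C) := by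
  have h1 : Measurable[C] (condProb μ (A ∩ t) C) := stronglyMeasurable_condExp.measurable
  have h2 : Measurable[C] (condProb μ A C) := stronglyMeasurable_condExp.measurable
  exact (h1.div h2).stronglyMeasurable

lemma ratio_mem {A t : Set X} (hA : MeasurableSet A) (ht : MeasurableSet t) :
    ∀ᵐ x ∂μ, ratio μ A t C x ∈ Set.Icc (0 : ℝ) 1 := by
  filter_upwards [condProb_nonneg (C := C) (μ := μ) (A ∩ t), condProb_nonneg (C := C) (μ := μ) A,
    condProb_le (C := C) (μ := μ) (hA.inter ht) hA inter_subset_left] with x h1 h2 h3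
  exact ⟨div_nonneg h1 h2, div_le_one_of_le₀ h3 h2⟩

lemma ratio_mul {A t : Set X} (hA : MeasurableSet A) (ht : MeasurableSet t) :
    ∀ᵐ x ∂μ, ratio μ A t C x * condProb μ A C x = condProb μ (A ∩ t) C x := by
  filter_upwards [condProb_nonneg (C := C) (μ := μ) (A ∩ t),
    condProb_le (C := C) (μ := μ) (hA.inter ht) hA inter_subset_left] with x h1 h3
  by_cases h : condProb μ A C x = 0
  · rw [h, mul_zero]
    linarith
  · exact div_mul_cancel₀ _ h

/-- Bayes' formula on a fibre of `f`: there, conditioning on `C ⊔ σ(f)` amounts to conditioning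
on `C` and normalising. -/
lemma condProb_sup_fib (hC : C ≤ mX) {f : X → ι} (hf : Measurable f) (i : ι) {t : Set X}
    (ht : MeasurableSet t) :
    ∀ᵐ x ∂μ, x ∈ f ⁻¹' {i} → condProb μ t (C ⊔ sig f) x = ratio μ (f ⁻¹' {i}) t C x := by
  set A := f ⁻¹' {i} with hAdef
  have hA : MeasurableSet A := fib hf i
  have hm : C ⊔ sig f ≤ mX := sup_le hC hf.comap_le
  have hAm : MeasurableSet[C ⊔ sig f] A := (le_sup_right : sig f ≤ C ⊔ sig f) _ (fib_sig f i)
  have hqm := stronglyMeasurable_ratio (C := C) (μ := μ) A t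
  have hq1 := ratio_mem (C := C) (μ := μ) hA ht
  have hqi : Integrable (ratio μ A t C) μ :=
    Integrable.of_bound (hqm.mono hC).aestronglyMeasurable 1
      (hq1.mono fun x h => by rw [Real.norm_of_nonneg h.1]; exact h.2)
  have h1 := condExp_indicator (μ := μ) (integrable_ind (μ := μ) ht) hAm
  have h2 : A.indicator (ratio μ A t C) =ᵐ[μ]
      μ[A.indicator (t.indicator fun _ => (1 : ℝ)) | C ⊔ sig f] := by
    refine ae_eq_condExp_of_forall_setIntegral_eq hm ((integrable_ind ht).indicator hA)
      (fun _ _ _ => (hqi.indicator hA).integrableOn) (fun B hB _ => ?_) ?_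
    · obtain ⟨B', hB', e⟩ := exists_inter_eq hB i
      have hBX := hm _ hB
      have hBX' := hC _ hB'
      have e4 : B.indicator (A.indicator (ratio μ A t C))
          = A.indicator (B'.indicator (ratio μ A t C)) := by
        rw [indicator_indicator, e, inter_comm, ← indicator_indicator]
      have e5 : B.indicator (A.indicator (t.indicator fun _ => (1 : ℝ)))
          = B'.indicator ((A ∩ t).indicator fun _ => (1 : ℝ)) := by
        rw [indicator_indicator, e, ← indicator_indicator, indicator_indicator A]
      rw [← integral_indicator hBX, ← integral_indicator hBX, e4, e5]
      have hb : ∀ᵐ x ∂μ, ‖B'.indicator (ratio μ A t C) x‖ ≤ 1 := hq1.mono fun x h => by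
        by_cases hx : x ∈ B' <;> simp [hx, abs_of_nonneg h.1, h.2]
      have I := integral_mul_condProb hC hA (hqm.indicator hB') hb
      rw [I]
      have e2 : (∫ x, B'.indicator (condProb μ (A ∩ t) C) x ∂μ)
          = ∫ x, B'.indicator ((A ∩ t).indicator fun _ => (1 : ℝ)) x ∂μ := by
        rw [integral_indicator hBX', integral_indicator hBX']
        exact setIntegral_condExp hC (integrable_ind (hA.inter ht)) hB'
      have e3 : (∫ x, B'.indicator (ratio μ A t C) x * condProb μ A C x ∂μ)
          = ∫ x, B'.indicator (condProb μ (A ∩ t) C) x ∂μ := by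
        refine integral_congr_ae ?_
        filter_upwards [ratio_mul (C := C) (μ := μ) hA ht] with x hx
        by_cases hxB : x ∈ B' <;> simp [hxB, hx]
      rw [e3, e2]
    · exact ((hqm.mono le_sup_left).indicator hAm).aestronglyMeasurable
  filter_upwards [h1, h2] with x hx1 hx2 hxA
  rw [hx1, indicator_of_mem hxA, indicator_of_mem hxA] at hx2
  exact hx2.symm

lemma condExp_sum_fib {g : X → κ} (hg : Measurable g) {A : Set X}
    (hA : MeasurableSet A) :
    ∀ᵐ x ∂μ, ∑ j, condProb μ (A ∩ g ⁻¹' {j}) C x = condProb μ A C x := by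
  have h := condExp_finsetSum (μ := μ) (s := Finset.univ)
    (f := fun j => (A ∩ g ⁻¹' {j}).indicator (fun _ => (1 : ℝ)))
    (fun j _ => integrable_ind (hA.inter (fib hg j))) C
  have e : (∑ j, (A ∩ g ⁻¹' {j}).indicator (fun _ => (1 : ℝ))) = A.indicator fun _ => (1 : ℝ) := by
    classical
    ext x
    rw [Finset.sum_apply]
    by_cases hx : x ∈ A
    · simp [Set.indicator_apply, hx]
    · simp [hx]
  rw [e] at h
  filter_upwards [h] with x hx
  rw [condProb, hx, Finset.sum_apply]
  rfl

/-- Chain rule for conditional entropy. -/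
lemma funH_prod (hC : C ≤ mX) {f : X → ι} {g : X → κ} (hf : Measurable f) (hg : Measurable g) :
    funH μ (fun x => (f x, g x)) C = funH μ f C + funH μ g (C ⊔ sig f) := by
  have hm : C ⊔ sig f ≤ mX := sup_le hC hf.comap_le
  set p : ι → X → ℝ := fun i => condProb μ (f ⁻¹' {i}) C with hp
  set q : ι → κ → X → ℝ := fun i j => ratio μ (f ⁻¹' {i}) (g ⁻¹' {j}) C with hq
  have hqm : ∀ i j, StronglyMeasurable[C] (q i j) := fun i j => stronglyMeasurable_ratio _ _
  have hqb : ∀ i j, ∀ᵐ x ∂μ, q i j x ∈ Set.Icc (0 : ℝ) 1 :=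
    fun i j => ratio_mem (fib hf i) (fib hg j)
  have hpb : ∀ i, ∀ᵐ x ∂μ, p i x ∈ Set.Icc (0 : ℝ) 1 := fun i => condProb_mem hC (fib hf i)
  have hφq : ∀ i j, Integrable (fun x => Real.negMulLog (q i j x)) μ := fun i j =>
    integrable_negMulLog ((hqm i j).mono hC).aestronglyMeasurable (hqb i j)
  have hφp : ∀ i, Integrable (fun x => Real.negMulLog (p i x)) μ := fun i =>
    integrable_negMulLog (aesm_condProb hC _) (hpb i)
  have hφqm : ∀ i j, StronglyMeasurable[C] (fun x => Real.negMulLog (q i j x)) := fun i j =>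
    Real.continuous_negMulLog.comp_stronglyMeasurable (hqm i j)
  have i1 : ∀ i j, Integrable (fun x => Real.negMulLog (q i j x) * p i x) μ := fun i j =>
    (hφq i j).mul_bdd (c := 1) (aesm_condProb hC _) ((hpb i).mono fun x h => by
      rw [Real.norm_of_nonneg h.1]; exact h.2)
  have i2 : ∀ i j, Integrable (fun x => q i j x * Real.negMulLog (p i x)) μ := fun i j =>
    (hφp i).bdd_mul (c := 1) ((hqm i j).mono hC).aestronglyMeasurable ((hqb i j).mono fun x h => by
      rw [Real.norm_of_nonneg h.1]; exact h.2)
  -- `-log (q p) = -log q - log p`, where `q p` is the conditional probability of an atom of the join.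
  have k1 : ∀ i j, setH μ ((fun x => (f x, g x)) ⁻¹' {(i, j)}) C
      = ∫ x, q i j x * Real.negMulLog (p i x) ∂μ
        + ∫ x, Real.negMulLog (q i j x) * p i x ∂μ := fun i j => by
    have e : (fun x => (f x, g x)) ⁻¹' {(i, j)} = f ⁻¹' {i} ∩ g ⁻¹' {j} := by
      ext x; simp
    rw [e, ← integral_add (i2 i j) (i1 i j)]
    refine integral_congr_ae ?_
    filter_upwards [ratio_mul (C := C) (μ := μ) (fib hf i) (fib hg j)] with x hx
    rw [← hx, Real.negMulLog_mul]
    simp only [hp, hq]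
    ring
  have k2 : ∀ i, ∑ j, ∫ x, q i j x * Real.negMulLog (p i x) ∂μ = setH μ (f ⁻¹' {i}) C :=
      fun i => by
    rw [← integral_finsetSum _ fun j _ => i2 i j]
    refine integral_congr_ae ?_
    filter_upwards [condExp_sum_fib (C := C) (μ := μ) hg (fib hf i)] with x hx
    rw [← Finset.sum_mul]
    by_cases h : p i x = 0
    · rw [h, Real.negMulLog_zero, mul_zero]
      exact (congrArg Real.negMulLog h).symm ▸ Real.negMulLog_zero.symm
    · have : ∑ j, q i j x = 1 := by
        simp only [hq, ratio]
        rw [← Finset.sum_div, hx]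
        exact div_self h
      rw [this, one_mul]
  have k3 : ∀ j, setH μ (g ⁻¹' {j}) (C ⊔ sig f)
      = ∑ i, ∫ x, Real.negMulLog (q i j x) * p i x ∂μ := fun j => by
    have hb : ∀ i, ∀ᵐ x ∂μ, ‖Real.negMulLog (q i j x)‖ ≤ 1 := fun i =>
      (hqb i j).mono fun _ => negMulLog_bound
    have : ∀ i, ∫ x, Real.negMulLog (q i j x) * p i x ∂μ
        = ∫ x, (f ⁻¹' {i}).indicator (fun x => Real.negMulLog (q i j x)) x ∂μ := fun i =>
      (integral_mul_condProb hC (fib hf i) (hφqm i j) (hb i)).symm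
    simp only [this]
    rw [← integral_finsetSum _ fun i _ => (hφq i j).indicator (fib hf i)]
    refine integral_congr_ae ?_
    have hall := fun i => condProb_sup_fib (C := C) (μ := μ) hC hf i (fib hg j)
    rw [← ae_all_iff] at hall
    filter_upwards [hall] with x hx
    classical
    rw [hx (f x) rfl]
    simp [Set.indicator_apply, hq]
  calc funH μ (fun x => (f x, g x)) C
      = ∑ i, ∑ j, setH μ ((fun x => (f x, g x)) ⁻¹' {(i, j)}) C := by
        rw [funH, Fintype.sum_prod_type]
    _ = ∑ i, (setH μ (f ⁻¹' {i}) C + ∑ j, ∫ x, Real.negMulLog (q i j x) * p i x ∂μ) := by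
        simp only [k1, Finset.sum_add_distrib, k2]
    _ = funH μ f C + funH μ g (C ⊔ sig f) := by
        rw [Finset.sum_add_distrib, Finset.sum_comm]
        simp only [funH, k3]

lemma funH_nonneg (hC : C ≤ mX) {f : X → ι} (hf : Measurable f) : 0 ≤ funH μ f C :=
  Finset.sum_nonneg fun i _ => setH_nonneg hC (fib hf i)

lemma funH_anti (h₁ : C₁ ≤ mX) (h₂ : C₂ ≤ mX)
    (h : C₁ ≤ eventuallyMeasurableSpace C₂ (ae μ)) {f : X → ι} (hf : Measurable f) :
    funH μ f C₂ ≤ funH μ f C₁ :=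
  Finset.sum_le_sum fun i _ => setH_anti h₁ h₂ h (fib hf i)

lemma funH_anti' (h₂ : C₂ ≤ mX) (h : C₁ ≤ C₂) {f : X → ι} (hf : Measurable f) :
    funH μ f C₂ ≤ funH μ f C₁ :=
  funH_anti (h.trans h₂) h₂ (h.trans le_eventuallyMeasurableSpace) hf

lemma funH_eq_zero (hC : C ≤ mX) {f : X → ι}
    (h : sig f ≤ eventuallyMeasurableSpace C (ae μ)) : funH μ f C = 0 :=
  Finset.sum_eq_zero fun i _ => setH_of_mem hC (h _ (fib_sig f i))

lemma funH_swap (f : X → ι) (g : X → κ) :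
    funH μ (fun x => (f x, g x)) C = funH μ (fun x => (g x, f x)) C := by
  refine Fintype.sum_equiv (Equiv.prodComm ι κ) _ _ fun i => ?_
  congr 1
  ext x
  simp [Prod.ext_iff, and_comm]

/-- A coarser partition has smaller entropy; coarseness is only required modulo the conditioning
σ-algebra and null sets. -/
lemma funH_mono (hC : C ≤ mX) {f : X → ι} {g : X → κ} (hf : Measurable f) (hg : Measurable g)
    (h : sig f ≤ eventuallyMeasurableSpace (C ⊔ sig g) (ae μ)) : funH μ f C ≤ funH μ g C := by
  have h1 := funH_prod (μ := μ) hC hf hg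
  rw [funH_swap, funH_prod hC hg hf, funH_eq_zero (sup_le hC hg.comap_le) h, add_zero] at h1
  rw [h1]
  exact le_add_of_nonneg_right (funH_nonneg (sup_le hC hf.comap_le) hg)

lemma funH_congr (hC : C ≤ mX) {f : X → ι} {g : X → κ} (hf : Measurable f) (hg : Measurable g)
    (h : sig f = sig g) : funH μ f C = funH μ g C :=
  le_antisymm (funH_mono hC hf hg ((h.le.trans le_sup_right).trans le_eventuallyMeasurableSpace))
    (funH_mono hC hg hf ((h.ge.trans le_sup_right).trans le_eventuallyMeasurableSpace))

lemma funH_prod_le (hC : C ≤ mX) {f : X → ι} {g : X → κ} (hf : Measurable f) (hg : Measurable g) :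
    funH μ (fun x => (f x, g x)) C ≤ funH μ f C + funH μ g C := by
  rw [funH_prod hC hf hg]
  have := funH_anti' (μ := μ) (sup_le hC hf.comap_le) (le_sup_left : C ≤ C ⊔ sig f) hg
  linarith

lemma sig_prod (f : X → ι) (g : X → κ) : sig (fun x => (f x, g x)) = sig f ⊔ sig g := by
  simp [sig, Prod.instMeasurableSpace, MeasurableSpace.prod, MeasurableSpace.comap_sup,
    MeasurableSpace.comap_comp, Function.comp_def]

end Entropy

/-! ### Entropy rates relative to an invariant σ-algebra -/

section Names

variable {X ι κ : Type*}

/-- The `n`-name map: its fibres are the atoms of `⋁_{i<n} T⁻ⁱα`, where `α` is the partition into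
fibres of `f`. -/
def nameMap (T : X → X) (f : X → ι) (n : ℕ) : X → (Fin n → ι) := fun x i => f (T^[i] x)

lemma joinAtoms_eq (T : X → X) (f : X → ι) (n : ℕ) :
    joinAtoms T (fun i => f ⁻¹' {i}) n = fun s => nameMap T f n ⁻¹' {s} := by
  ext s x
  simp [joinAtoms, nameMap, funext_iff]

lemma iSup_fin_last {L : Type*} [CompleteLattice L] (u : ℕ → L) (n : ℕ) :
    (⨆ i : Fin (n + 1), u i) = (⨆ i : Fin n, u i) ⊔ u n := by
  refine le_antisymm (iSup_le fun i => ?_) (sup_le (iSup_le fun i => ?_) ?_)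
  · rcases Nat.lt_succ_iff_lt_or_eq.1 i.2 with h | h
    · exact (le_iSup (fun i : Fin n => u i) ⟨i, h⟩).trans le_sup_left
    · rw [h]
      exact le_sup_right
  · exact le_iSup (fun i : Fin (n + 1) => u i) i.castSucc
  · exact le_iSup (fun i : Fin (n + 1) => u i) (Fin.last n)

lemma iSup_fin_first {L : Type*} [CompleteLattice L] (u : ℕ → L) (n : ℕ) :
    (⨆ i : Fin (n + 1), u i) = u 0 ⊔ ⨆ i : Fin n, u (i + 1) := by
  refine le_antisymm (iSup_le fun i => ?_) (sup_le ?_ (iSup_le fun i => ?_))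
  · refine Fin.cases le_sup_left (fun j => ?_) i
    exact (le_iSup (fun i : Fin n => u (i + 1)) j).trans le_sup_right
  · exact le_iSup (fun i : Fin (n + 1) => u i) 0
  · exact le_iSup (fun i : Fin (n + 1) => u i) i.succ

variable [MeasurableSpace ι] [MeasurableSpace κ]

lemma sig_pi {n : ℕ} (F : Fin n → X → κ) : sig (fun x i => F i x) = ⨆ i, sig (F i) := by
  simp [sig, MeasurableSpace.pi, MeasurableSpace.comap_iSup, MeasurableSpace.comap_comp,
    Function.comp_def]

lemma sig_comp (f : X → ι) (T : X → X) : sig (f ∘ T) = (sig f).comap T :=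
  MeasurableSpace.comap_comp.symm

lemma sig_nameMap (T : X → X) (f : X → ι) (n : ℕ) :
    sig (nameMap T f n) = ⨆ i : Fin n, sig (f ∘ T^[i]) := sig_pi _

lemma sig_nameMap_last (T : X → X) (f : X → ι) (n : ℕ) :
    sig (nameMap T f (n + 1)) = sig (nameMap T f n) ⊔ sig (f ∘ T^[n]) := by
  rw [sig_nameMap, sig_nameMap, iSup_fin_last (fun i => sig (f ∘ T^[i]))]

lemma sig_nameMap_first (T : X → X) (f : X → ι) (n : ℕ) :
    sig (nameMap T f (n + 1)) = sig f ⊔ (sig (nameMap T f n)).comap T := by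
  rw [sig_nameMap, sig_nameMap, iSup_fin_first (fun i => sig (f ∘ T^[i])),
    MeasurableSpace.comap_iSup]
  simp only [← sig_comp]
  rfl

lemma sig_nameMap_mono (T : X → X) (f : X → ι) : Monotone fun n => sig (nameMap T f n) :=
  monotone_nat_of_le_succ fun n => by
    rw [sig_nameMap_last]
    exact le_sup_left

lemma sig_nameMap_le {C : MeasurableSpace X} {T : X → X} {f : X → ι} (h : sig f ≤ C)
    (hT : C.comap T ≤ C) (n : ℕ) : sig (nameMap T f n) ≤ C := by
  induction n with
  | zero => rw [sig_nameMap]; simp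
  | succ n ih =>
    rw [sig_nameMap_first]
    exact sup_le h ((MeasurableSpace.comap_mono ih).trans hT)

lemma sig_nameMap_iterate_le (T : X → X) (f : X → ι) {m : ℕ} (hm : 1 ≤ m) (n : ℕ) :
    sig (nameMap T^[m] f n) ≤ sig (nameMap T f (m * n)) := by
  rw [sig_nameMap, sig_nameMap]
  refine iSup_le fun i => ?_
  rw [← Function.iterate_mul]
  exact le_iSup (fun i : Fin (m * n) => sig (f ∘ T^[i]))
    ⟨m * i, Nat.mul_lt_mul_of_pos_left i.2 hm⟩

/-- The past `⋁_{i≥1} T⁻ⁱα` of the partition into fibres of `f`. -/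
@[reducible]
def pastAlg (T : X → X) (f : X → ι) : MeasurableSpace X := ⨆ n, (sig (nameMap T f n)).comap T

end Names

lemma eventually_mono {X : Type*} {C₁ C₂ : MeasurableSpace X} {mX : MeasurableSpace X}
    {μ : Measure X} (h : C₁ ≤ C₂) :
    eventuallyMeasurableSpace C₁ (ae μ) ≤ eventuallyMeasurableSpace C₂ (ae μ) :=
  fun _ ⟨t, ht, hst⟩ => ⟨t, h _ ht, hst⟩

section Dynamics

variable {X ι κ : Type*} {C : MeasurableSpace X} {mX : MeasurableSpace X}
  {μ : Measure X} [IsProbabilityMeasure μ] {T : X → X}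
  [Fintype ι] [MeasurableSpace ι] [MeasurableSingletonClass ι]
  [Fintype κ] [MeasurableSpace κ] [MeasurableSingletonClass κ]

lemma setH_comp (hT : MeasurePreserving T μ μ) (hC : C ≤ mX) {s : Set X} (hs : MeasurableSet s) :
    setH μ (T ⁻¹' s) (C.comap T) = setH μ s C := by
  have hC' : C.comap T ≤ mX := (MeasurableSpace.comap_mono hC).trans hT.measurable.comap_le
  have key : condProb μ s C ∘ T =ᵐ[μ] condProb μ (T ⁻¹' s) (C.comap T) := by
    have hi : Integrable (condProb μ s C) μ := integrable_condExp
    have hi' : Integrable (condProb μ s C ∘ T) μ := hT.integrable_comp_of_integrable hi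
    refine ae_eq_condExp_of_forall_setIntegral_eq hC' (integrable_ind (hT.measurable hs))
      (fun _ _ _ => hi'.integrableOn) (fun B hB _ => ?_) ?_
    · obtain ⟨B', hB', rfl⟩ := hB
      have h1 := setIntegral_map (μ := μ) (hC _ hB')
        (by rw [hT.map_eq]; exact hi.aestronglyMeasurable) hT.measurable.aemeasurable
      have h2 := setIntegral_map (μ := μ) (f := s.indicator fun _ => (1 : ℝ)) (hC _ hB')
        (by rw [hT.map_eq]; exact (integrable_ind hs).aestronglyMeasurable)
        hT.measurable.aemeasurable
      rw [hT.map_eq] at h1 h2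
      refine h1.symm.trans ((setIntegral_condExp hC (integrable_ind hs) hB').trans (h2.trans ?_))
      rfl
    · have : Measurable[C] (condProb μ s C) := stronglyMeasurable_condExp.measurable
      have h2 : Measurable[C.comap T] (condProb μ s C ∘ T) :=
        this.comp (comap_measurable T)
      exact h2.stronglyMeasurable.aestronglyMeasurable
  have h3 : setH μ (T ⁻¹' s) (C.comap T) = ∫ x, Real.negMulLog (condProb μ s C (T x)) ∂μ := by
    refine integral_congr_ae ?_
    filter_upwards [key] with x hx
    rw [← hx]
    rfl
  have h4 := integral_map (μ := μ) (f := fun x => Real.negMulLog (condProb μ s C x))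
    hT.measurable.aemeasurable
    (by
      rw [hT.map_eq]
      exact Real.continuous_negMulLog.comp_aestronglyMeasurable (aesm_condProb hC s))
  rw [h3, ← h4, hT.map_eq]
  rfl

lemma funH_comp (hT : MeasurePreserving T μ μ) (hC : C ≤ mX) {f : X → ι} (hf : Measurable f) :
    funH μ (f ∘ T) (C.comap T) = funH μ f C :=
  Finset.sum_congr rfl fun i _ => setH_comp hT hC (fib hf i)

lemma measurable_nameMap (hT : Measurable T) {f : X → ι} (hf : Measurable f) (n : ℕ) :
    Measurable (nameMap T f n) :=
  measurable_pi_lambda _ fun i => hf.comp (hT.iterate i)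

lemma pastAlg_le (hT : Measurable T) {f : X → ι} (hf : Measurable f) : pastAlg T f ≤ mX :=
  iSup_le fun n =>
    (MeasurableSpace.comap_mono (measurable_nameMap hT hf n).comap_le).trans hT.comap_le

/-- `H_μ(α | C ∨ ⋁_{i≥1} T⁻ⁱα)`, the closed form of `h_μ(T, α | C)` for a `T`-invariant `C`. -/
noncomputable def rate {mX : MeasurableSpace X} (μ : Measure X) (T : X → X) (f : X → ι)
    (C : MeasurableSpace X) : ℝ :=
  funH μ f (C ⊔ pastAlg T f)

lemma rate_nonneg (hT : Measurable T) (hC : C ≤ mX) {f : X → ι} (hf : Measurable f) :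
    0 ≤ rate μ T f C :=
  funH_nonneg (sup_le hC (pastAlg_le hT hf)) hf

lemma funH_nameMap_zero (hC : C ≤ mX) (f : X → ι) : funH μ (nameMap T f 0) C = 0 := by
  refine funH_eq_zero hC ?_
  rw [sig_nameMap]
  simp

/-- The increments of `n ↦ H_μ(⋁_{i<n} T⁻ⁱα | C)`. -/
lemma funH_nameMap_succ (hT : MeasurePreserving T μ μ) (hC : C ≤ mX) (hCT : C.comap T = C)
    {f : X → ι} (hf : Measurable f) (n : ℕ) :
    funH μ (nameMap T f (n + 1)) C
      = funH μ (nameMap T f n) C + funH μ f (C ⊔ (sig (nameMap T f n)).comap T) := by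
  have hn := measurable_nameMap hT.measurable hf n
  have hnT := hn.comp hT.measurable
  have h1 : funH μ (nameMap T f (n + 1)) C = funH μ (fun x => ((nameMap T f n ∘ T) x, f x)) C :=
    funH_congr hC (measurable_nameMap hT.measurable hf (n + 1)) (hnT.prodMk hf) (by
      rw [sig_prod, sig_nameMap_first, sig_comp, sup_comm])
  have h2 : funH μ (nameMap T f n ∘ T) C = funH μ (nameMap T f n) C := by
    conv_lhs => rw [← hCT]
    exact funH_comp hT hC hn
  rw [h1, funH_prod hC hnT hf, h2, sig_comp]

lemma comap_nameMap_le (hT : Measurable T) {f : X → ι} (hf : Measurable f) (n : ℕ) :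
    (sig (nameMap T f n)).comap T ≤ mX :=
  (le_iSup (fun n => (sig (nameMap T f n)).comap T) n).trans (pastAlg_le hT hf)

lemma mul_rate_le (hT : MeasurePreserving T μ μ) (hC : C ≤ mX) (hCT : C.comap T = C)
    {f : X → ι} (hf : Measurable f) (n : ℕ) :
    n * rate μ T f C ≤ funH μ (nameMap T f n) C := by
  induction n with
  | zero => rw [funH_nameMap_zero hC]; simp
  | succ n ih =>
    rw [funH_nameMap_succ hT hC hCT hf]
    have : rate μ T f C ≤ funH μ f (C ⊔ (sig (nameMap T f n)).comap T) :=
      funH_anti' (sup_le hC (pastAlg_le hT.measurable hf))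
        (sup_le_sup_left (le_iSup (fun n => (sig (nameMap T f n)).comap T) n) C) hf
    push_cast
    linarith

lemma tendsto_rate (hT : MeasurePreserving T μ μ) (hC : C ≤ mX) (hCT : C.comap T = C)
    {f : X → ι} (hf : Measurable f) :
    Tendsto (fun n : ℕ => (n : ℝ)⁻¹ * funH μ (nameMap T f n) C) atTop (𝓝 (rate μ T f C)) := by
  have hd : Tendsto (fun n => funH μ f (C ⊔ (sig (nameMap T f n)).comap T)) atTop
      (𝓝 (rate μ T f C)) := by
    have e : C ⊔ pastAlg T f = ⨆ n, (C ⊔ (sig (nameMap T f n)).comap T) := by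
      rw [pastAlg, sup_iSup]
    rw [rate, e]
    refine tendsto_finsetSum _ fun i _ => tendsto_setH_iSup
      (fun n => sup_le hC (comap_nameMap_le hT.measurable hf n)) (fun a b hab => ?_) (fib hf i)
    exact sup_le_sup_left (MeasurableSpace.comap_mono (sig_nameMap_mono T f hab)) C
  refine hd.cesaro.congr fun n => ?_
  congr 1
  induction n with
  | zero => rw [funH_nameMap_zero hC]; simp
  | succ n ih => rw [Finset.sum_range_succ, ih, funH_nameMap_succ hT hC hCT hf]

/-- The infimum defining `hPartCond` is the limit of the entropy per unit time, because the
increments of the entropy of names decrease to `rate`. -/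
lemma hPartCond_eq_rate (hT : MeasurePreserving T μ μ) (hC : C ≤ mX) (hCT : C.comap T = C)
    {f : X → ι} (hf : Measurable f) :
    hPartCond μ T (fun i => f ⁻¹' {i}) C = rate μ T f C := by
  have e : ∀ n : ℕ, (1 / (n + 1 : ℝ)) * condH μ (joinAtoms T (fun i => f ⁻¹' {i}) (n + 1)) C
      = ((n + 1 : ℕ) : ℝ)⁻¹ * funH μ (nameMap T f (n + 1)) C := fun n => by
    rw [joinAtoms_eq, one_div]
    push_cast
    rfl
  unfold hPartCond
  simp only [e]
  have hlow : ∀ n : ℕ, rate μ T f C ≤ ((n + 1 : ℕ) : ℝ)⁻¹ * funH μ (nameMap T f (n + 1)) C :=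
    fun n => by
      rw [inv_mul_eq_div, le_div_iff₀ (by positivity), mul_comm]
      exact mul_rate_le hT hC hCT hf (n + 1)
  refine le_antisymm ?_ (le_ciInf hlow)
  exact ge_of_tendsto' ((tendsto_add_atTop_iff_nat 1).2 (tendsto_rate hT hC hCT hf))
    fun n => ciInf_le ⟨_, Set.forall_mem_range.2 hlow⟩ n

lemma funH_nameMap_le (hT : Measurable T) (hC : C ≤ mX) {f : X → ι} (hf : Measurable f) {c : ℝ}
    (n : ℕ) (h : ∀ i < n, funH μ (f ∘ T^[i]) C ≤ c) : funH μ (nameMap T f n) C ≤ n * c := by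
  induction n with
  | zero => rw [funH_nameMap_zero hC]; simp
  | succ n ih =>
    have hfn := hf.comp (hT.iterate n)
    have hn := measurable_nameMap hT hf n
    rw [funH_congr hC (measurable_nameMap hT hf (n + 1)) (hn.prodMk hfn)
      (by rw [sig_prod, sig_nameMap_last])]
    have h1 := funH_prod_le (μ := μ) hC hn hfn
    have h2 := ih fun i hi => h i (hi.trans n.lt_succ_self)
    have h3 := h n n.lt_succ_self
    push_cast
    linarith

/-- Continuity of the entropy in the partition, in the Rokhlin metric. -/
lemma rate_le_add (hT : MeasurePreserving T μ μ) (hC : C ≤ mX) (hCT : C.comap T = C)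
    {f : X → ι} {g : X → κ} (hf : Measurable f) (hg : Measurable g) :
    rate μ T f C ≤ rate μ T g C + funH μ f (sig g) := by
  refine le_of_tendsto_of_tendsto (tendsto_rate hT hC hCT hf)
    ((tendsto_rate hT hC hCT hg).add_const _) (eventually_atTop.2 ⟨1, fun n hn => ?_⟩)
  have hfn := measurable_nameMap hT.measurable hf n
  have hgn := measurable_nameMap hT.measurable hg n
  have hC' : C ⊔ sig (nameMap T g n) ≤ mX := sup_le hC hgn.comap_le
  have h1 : funH μ (nameMap T f n) C ≤ funH μ (fun x => (nameMap T g n x, nameMap T f n x)) C :=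
    funH_mono hC hfn (hgn.prodMk hfn) (by
      rw [sig_prod]
      exact (le_sup_right.trans le_sup_right).trans le_eventuallyMeasurableSpace)
  rw [funH_prod hC hgn hfn] at h1
  have h2 := funH_nameMap_le (μ := μ) (c := funH μ f (sig g)) hT.measurable hC' hf n
    fun i hi => by
      rw [← funH_comp (hT.iterate i) hg.comap_le hf, ← sig_comp]
      refine funH_anti' hC' (le_trans ?_ le_sup_right) (hf.comp (hT.measurable.iterate i))
      rw [sig_nameMap]
      exact le_iSup (fun i : Fin n => sig (g ∘ T^[i])) ⟨i, hi⟩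
  have hn' : (0 : ℝ) < n := by exact_mod_cast hn
  have : (n : ℝ)⁻¹ * funH μ (nameMap T f n) C
      ≤ (n : ℝ)⁻¹ * (funH μ (nameMap T g n) C + n * funH μ f (sig g)) :=
    mul_le_mul_of_nonneg_left (h1.trans (by linarith)) (by positivity)
  refine this.trans (le_of_eq ?_)
  field_simp

lemma rate_mono (hT : MeasurePreserving T μ μ) (hC : C ≤ mX) (hCT : C.comap T = C)
    {f : X → ι} {g : X → κ} (hf : Measurable f) (hg : Measurable g) (h : sig f ≤ sig g) :
    rate μ T f C ≤ rate μ T g C := by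
  have := rate_le_add hT hC hCT hf hg
  rwa [funH_eq_zero hg.comap_le (h.trans le_eventuallyMeasurableSpace), add_zero] at this

lemma sig_nameMap_prod (T : X → X) (f : X → ι) (g : X → κ) (n : ℕ) :
    sig (nameMap T (fun x => (f x, g x)) n) = sig (nameMap T f n) ⊔ sig (nameMap T g n) := by
  simp only [sig_nameMap]
  rw [← iSup_sup_eq]
  exact iSup_congr fun i => sig_prod (f ∘ T^[i]) (g ∘ T^[i])

lemma rate_prod_le (hT : MeasurePreserving T μ μ) (hC : C ≤ mX) (hCT : C.comap T = C)
    {f : X → ι} {g : X → κ} (hf : Measurable f) (hg : Measurable g) :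
    rate μ T (fun x => (f x, g x)) C ≤ rate μ T f C + rate μ T g C := by
  refine le_of_tendsto_of_tendsto' (tendsto_rate hT hC hCT (hf.prodMk hg))
    ((tendsto_rate hT hC hCT hf).add (tendsto_rate hT hC hCT hg)) fun n => ?_
  have hfn := measurable_nameMap hT.measurable hf n
  have hgn := measurable_nameMap hT.measurable hg n
  rw [← mul_add]
  refine mul_le_mul_of_nonneg_left ?_ (by positivity)
  rw [funH_congr hC (measurable_nameMap hT.measurable (hf.prodMk hg) n) (hfn.prodMk hgn)
    (by rw [sig_prod, sig_nameMap_prod])]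
  exact funH_prod_le hC hfn hgn

lemma comap_iterate (hCT : C.comap T = C) (m : ℕ) : C.comap T^[m] = C := by
  induction m with
  | zero => exact MeasurableSpace.comap_id
  | succ m ih => rw [Function.iterate_succ, ← MeasurableSpace.comap_comp, ih, hCT]

lemma rate_iterate_le (hT : MeasurePreserving T μ μ) (hC : C ≤ mX) (hCT : C.comap T = C)
    {f : X → ι} (hf : Measurable f) {m : ℕ} (hm : 1 ≤ m) :
    rate μ T^[m] f C ≤ m * rate μ T f C := by
  have hmn : Tendsto (fun n : ℕ => m * n) atTop atTop :=
    tendsto_id.const_mul_atTop' hm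
  have h1 := ((tendsto_rate hT hC hCT hf).comp hmn).const_mul (m : ℝ)
  refine le_of_tendsto_of_tendsto' (tendsto_rate (hT.iterate m) hC (comap_iterate hCT m) hf) h1
    fun n => ?_
  have h2 : funH μ (nameMap T^[m] f n) C ≤ funH μ (nameMap T f (m * n)) C :=
    funH_mono hC (measurable_nameMap (hT.measurable.iterate m) hf n)
      (measurable_nameMap hT.measurable hf _)
      (((sig_nameMap_iterate_le T f hm n).trans le_sup_right).trans le_eventuallyMeasurableSpace)
  have hm' : (m : ℝ) ≠ 0 := by positivity
  calc (n : ℝ)⁻¹ * funH μ (nameMap T^[m] f n) C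
      ≤ (n : ℝ)⁻¹ * funH μ (nameMap T f (m * n)) C :=
        mul_le_mul_of_nonneg_left h2 (by positivity)
    _ = _ := by
        simp only [Function.comp]
        push_cast
        rw [mul_inv, ← mul_assoc, ← mul_assoc, mul_inv_cancel₀ hm', one_mul]

end Dynamics

/-! ### The relative Pinsker algebra as the sets of zero entropy -/

section PinskerSets

variable {X ι : Type*}

/-- Membership in `s`, as a `Prop`-valued map: it encodes the partition `{s, sᶜ}`. -/
def ind (s : Set X) : X → Prop := fun x => x ∈ s

lemma sig_ind_le {m : MeasurableSpace X} {s : Set X} (hs : MeasurableSet[m] s) :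
    sig (ind s) ≤ m :=
  (measurableSet_setOfPred.1 hs : Measurable[m] (ind s)).comap_le

lemma mem_sig_ind (s : Set X) : MeasurableSet[sig (ind s)] s :=
  ⟨{True}, measurableSet_singleton _, by ext x; simp [ind]⟩

/-- The joint partition generated by the first `k` sets of a sequence. -/
def tup (B : ℕ → Set X) (k : ℕ) : X → (Fin k → Prop) := fun x i => ind (B i) x

lemma sig_tup (B : ℕ → Set X) (k : ℕ) : sig (tup B k) = ⨆ i : Fin k, sig (ind (B i)) :=
  sig_pi fun (i : Fin k) => ind (B i)

lemma sig_tup_succ (B : ℕ → Set X) (k : ℕ) :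
    sig (tup B (k + 1)) = sig (tup B k) ⊔ sig (ind (B k)) := by
  rw [sig_tup, sig_tup, iSup_fin_last (fun i => sig (ind (B i)))]

lemma mem_iSup_tup (B : ℕ → Set X) (n : ℕ) : MeasurableSet[⨆ k, sig (tup B k)] (B n) := by
  have h : sig (ind (B n)) ≤ ⨆ k, sig (tup B k) := by
    refine le_trans ?_ (le_iSup (fun k => sig (tup B k)) (n + 1))
    rw [sig_tup_succ]
    exact le_sup_right
  exact h _ (mem_sig_ind _)

lemma iSup_tup_le {m : MeasurableSpace X} {B : ℕ → Set X} (hB : ∀ n, MeasurableSet[m] (B n)) :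
    ⨆ k, sig (tup B k) ≤ m :=
  iSup_le fun k => by
    rw [sig_tup]
    exact iSup_le fun i => sig_ind_le (hB i)

lemma exists_fun_of_finPart {mX : MeasurableSpace X} (β : FinPart X mX) :
    ∃ b : X → Fin β.k, Measurable b ∧ β.atom = fun i => b ⁻¹' {i} := by
  have h : ∀ x, ∃ i, x ∈ β.atom i := fun x => by
    have := β.cover.ge (mem_univ x)
    simpa using this
  choose b hb using h
  have e : β.atom = fun i => b ⁻¹' {i} := by
    ext i x
    refine ⟨fun hx => ?_, fun hx => ?_⟩
    · by_contra hne
      exact Set.disjoint_left.1 (β.disj _ _ hne) (hb x) hx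
    · have : b x = i := hx
      exact this ▸ hb x
  refine ⟨b, measurable_to_countable' fun i => ?_, e⟩
  have := β.meas i
  rwa [e] at this

variable {C : MeasurableSpace X} {mX : MeasurableSpace X}
  {μ : Measure X} [IsProbabilityMeasure μ] {T : X → X}
  [Fintype ι] [MeasurableSpace ι] [MeasurableSingletonClass ι]

lemma measurable_ind {s : Set X} (hs : MeasurableSet s) : Measurable (ind s) :=
  measurableSet_setOfPred.1 hs

lemma measurable_tup {B : ℕ → Set X} (hB : ∀ n, MeasurableSet (B n)) (k : ℕ) :
    Measurable (tup B k) :=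
  measurable_pi_lambda _ fun i => measurable_ind (hB i)

lemma rate_tup (hT : MeasurePreserving T μ μ) (hC : C ≤ mX) (hCT : C.comap T = C)
    {B : ℕ → Set X} (hB : ∀ n, MeasurableSet (B n)) (h0 : ∀ n, rate μ T (ind (B n)) C = 0)
    (k : ℕ) : rate μ T (tup B k) C = 0 := by
  refine le_antisymm ?_ (rate_nonneg hT.measurable hC (measurable_tup hB k))
  induction k with
  | zero =>
    refine (funH_eq_zero (sup_le hC (pastAlg_le hT.measurable (measurable_tup hB 0))) ?_).le
    rw [sig_tup]
    simp
  | succ k ih =>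
    have hk := measurable_tup hB k
    have hi := measurable_ind (hB k)
    have h1 := rate_mono hT hC hCT (measurable_tup hB (k + 1)) (hk.prodMk hi)
      (by rw [sig_prod, sig_tup_succ])
    have h2 := rate_prod_le hT hC hCT hk hi
    rw [h0 k] at h2
    linarith

/-- Sets of zero entropy do not contribute to the entropy of any power of `T`: the entropy rate
of `f` is at most its entropy given such sets. -/
lemma rate_iterate_le_funH (hT : MeasurePreserving T μ μ) (hC : C ≤ mX) (hCT : C.comap T = C)
    {B : ℕ → Set X} (hB : ∀ n, MeasurableSet (B n)) (h0 : ∀ n, rate μ T (ind (B n)) C = 0)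
    {f : X → ι} (hf : Measurable f) {m : ℕ} (hm : 1 ≤ m) :
    rate μ T^[m] f C ≤ funH μ f (⨆ k, sig (tup B k)) := by
  have hmono : Monotone fun k => sig (tup B k) := monotone_nat_of_le_succ fun k => by
    rw [sig_tup_succ]
    exact le_sup_left
  have hlim : Tendsto (fun k => funH μ f (sig (tup B k))) atTop
      (𝓝 (funH μ f (⨆ k, sig (tup B k)))) :=
    tendsto_finsetSum _ fun i _ =>
      tendsto_setH_iSup (fun k => (measurable_tup hB k).comap_le) hmono (fib hf i)
  refine ge_of_tendsto' hlim fun k => ?_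
  have hk := measurable_tup hB k
  have h1 := rate_le_add (hT.iterate m) hC (comap_iterate hCT m) hf hk
  have h2 := rate_iterate_le hT hC hCT hk hm
  rw [rate_tup hT hC hCT hB h0 k, mul_zero] at h2
  linarith

/-- The zero-entropy sets already form a σ-algebra, which is the relative Pinsker algebra. -/
lemma measurableSet_relPinsker (hT : MeasurePreserving T μ μ) (hC : C ≤ mX)
    (hCT : C.comap T = C) {s : Set X} :
    MeasurableSet[relPinsker μ T C] s ↔ MeasurableSet s ∧ rate μ T (ind s) C = 0 := by
  constructor
  · intro hs
    refine MeasurableSpace.generateFrom_induction _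
      (fun s _ => MeasurableSet[mX] s ∧ rate μ T (ind s) C = 0) ?_ ?_ ?_ ?_ s hs
    · rintro _ ⟨β, hβ, i, rfl⟩ -
      obtain ⟨b, hb, e⟩ := exists_fun_of_finPart β
      rw [e, hPartCond_eq_rate hT hC hCT hb] at hβ
      have hi := β.meas i
      refine ⟨hi, le_antisymm ?_ (rate_nonneg hT.measurable hC (measurable_ind hi))⟩
      rw [← hβ]
      refine rate_mono hT hC hCT (measurable_ind hi) hb (sig_ind_le ?_)
      rw [e]
      exact fib_sig b i
    · exact ⟨MeasurableSet.empty, funH_eq_zero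
        (sup_le hC (pastAlg_le hT.measurable (measurable_ind MeasurableSet.empty)))
        (sig_ind_le (@MeasurableSet.empty _ (eventuallyMeasurableSpace _ _)))⟩
    · rintro t - ⟨ht, h0⟩
      refine ⟨ht.compl, le_antisymm ?_ (rate_nonneg hT.measurable hC (measurable_ind ht.compl))⟩
      rw [← h0]
      exact rate_mono hT hC hCT (measurable_ind ht.compl) (measurable_ind ht)
        (sig_ind_le (mem_sig_ind t).compl)
    · intro B _ hB
      have hU : MeasurableSet (⋃ n, B n) := MeasurableSet.iUnion fun n => (hB n).1
      refine ⟨hU, le_antisymm ?_ (rate_nonneg hT.measurable hC (measurable_ind hU))⟩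
      have h := rate_iterate_le_funH hT hC hCT (fun n => (hB n).1) (fun n => (hB n).2)
        (measurable_ind hU) le_rfl
      rw [Function.iterate_one] at h
      refine h.trans (funH_eq_zero (iSup_tup_le fun n => (hB n).1) ?_).le
      exact (sig_ind_le (MeasurableSet.iUnion fun n => mem_iSup_tup B n)).trans
        le_eventuallyMeasurableSpace
  · rintro ⟨hs, h0⟩
    classical
    let b : X → Fin 2 := fun x => if x ∈ s then 0 else 1
    have hb' : ∀ m : MeasurableSpace X, MeasurableSet[m] s → Measurable[m] b := fun m h =>
      Measurable.ite h measurable_const measurable_const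
    have hb : Measurable b := hb' _ hs
    let β : FinPart X mX :=
      { k := 2
        atom := fun i => b ⁻¹' {i}
        meas := fun i => fib hb i
        disj := fun i j hij => Disjoint.preimage _ (by simpa using hij)
        cover := by ext x; simp }
    refine MeasurableSpace.measurableSet_generateFrom ⟨β, ?_, (0 : Fin 2), ?_⟩
    · change hPartCond μ T (fun i => b ⁻¹' {i}) C = 0
      rw [hPartCond_eq_rate hT hC hCT hb]
      refine le_antisymm ?_ (rate_nonneg hT.measurable hC hb)
      rw [← h0]
      exact rate_mono hT hC hCT hb (measurable_ind hs) (hb' _ (mem_sig_ind s)).comap_le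
    · ext x
      by_cases hx : x ∈ s <;> simp [β, b, hx]

lemma relPinsker_le (hT : MeasurePreserving T μ μ) (hC : C ≤ mX) (hCT : C.comap T = C) :
    relPinsker μ T C ≤ mX :=
  fun _ hs => ((measurableSet_relPinsker hT hC hCT).1 hs).1

/-- The upper bound: `h_μ(T^m, α | C) ≤ H_μ(α | P)` for the relative Pinsker algebra `P`.
The conditional probabilities `μ(f = i | P)` are measurable with respect to countably many sets
of `P`, so that these sets already realise `H_μ(α | P)`. -/
lemma rate_iterate_le_relPinsker (hT : MeasurePreserving T μ μ) (hC : C ≤ mX)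
    (hCT : C.comap T = C) {f : X → ι} (hf : Measurable f) {m : ℕ} (hm : 1 ≤ m) :
    rate μ T^[m] f C ≤ funH μ f (relPinsker μ T C) := by
  have hP := relPinsker_le hT hC hCT
  have : Nonempty X := nonempty_of_isProbabilityMeasure μ
  have : Nonempty ι := this.map f
  obtain ⟨e, he⟩ := exists_surjective_nat (ι × ℚ)
  let g : ι → X → ℝ := fun i => condProb μ (f ⁻¹' {i}) (relPinsker μ T C)
  have hg : ∀ i, Measurable[relPinsker μ T C] (g i) := fun i => stronglyMeasurable_condExp.measurable
  let B : ℕ → Set X := fun n => g (e n).1 ⁻¹' Ioi ((e n).2 : ℝ)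
  have hBP : ∀ n, MeasurableSet[relPinsker μ T C] (B n) := fun n => hg _ measurableSet_Ioi
  have hB : ∀ n, MeasurableSet (B n) ∧ rate μ T (ind (B n)) C = 0 := fun n =>
    (measurableSet_relPinsker hT hC hCT).1 (hBP n)
  refine (rate_iterate_le_funH hT hC hCT (fun n => (hB n).1) (fun n => (hB n).2) hf hm).trans
    (le_of_eq ?_)
  set G := ⨆ k, sig (tup B k) with hG
  have hGP : G ≤ relPinsker μ T C := iSup_tup_le hBP
  refine Finset.sum_congr rfl fun i _ => integral_congr_ae ?_
  have hgG : Measurable[G] (g i) := by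
    rw [measurable_iff_comap_le, BorelSpace.measurable_eq (α := ℝ),
      Real.borel_eq_generateFrom_Ioi_rat, MeasurableSpace.comap_generateFrom]
    refine MeasurableSpace.generateFrom_le ?_
    rintro _ ⟨u, hu, rfl⟩
    obtain ⟨q, rfl⟩ := by simpa using hu
    obtain ⟨n, hn⟩ := he (i, q)
    have hmem := mem_iSup_tup B n
    simp only [B, hn] at hmem
    exact hmem
  have h1 : μ[g i | G] =ᵐ[μ] condProb μ (f ⁻¹' {i}) G := condExp_condExp_of_le hGP hP
  have h2 : μ[g i | G] = g i :=
    condExp_of_stronglyMeasurable (hGP.trans hP) hgG.stronglyMeasurable integrable_condExp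
  rw [h2] at h1
  filter_upwards [h1] with x hx
  rw [← hx]

end PinskerSets

/-! ### The remote past is contained in the relative Pinsker algebra -/

section RemotePast

variable {X ι κ : Type*}

/-- The past before time `m`: the σ-algebra `C ∨ ⋁_{i≥m} T⁻ⁱα`. -/
@[reducible]
def remote [MeasurableSpace ι] (T : X → X) (f : X → ι) (C : MeasurableSpace X) (m : ℕ) :
    MeasurableSpace X :=
  C ⊔ ⨆ n, (sig (nameMap T f n)).comap T^[m]

lemma remote_one [MeasurableSpace ι] (T : X → X) (f : X → ι) (C : MeasurableSpace X) :
    remote T f C 1 = C ⊔ pastAlg T f := rfl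

lemma comap_remote [MeasurableSpace ι] {T : X → X} {C : MeasurableSpace X}
    (hCT : C.comap T = C) (f : X → ι) (m : ℕ) :
    (remote T f C m).comap T = remote T f C (m + 1) := by
  simp only [remote, MeasurableSpace.comap_sup, MeasurableSpace.comap_iSup, hCT,
    Function.iterate_succ]
  congr 1
  refine iSup_congr fun n => ?_
  rw [MeasurableSpace.comap_comp]

lemma antitone_remote [MeasurableSpace ι] (T : X → X) (f : X → ι) (C : MeasurableSpace X) :
    Antitone (remote T f C) :=
  antitone_nat_of_succ_le fun m => sup_le_sup_left (iSup_le fun n => by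
    rw [Function.iterate_succ', ← MeasurableSpace.comap_comp]
    refine le_trans (MeasurableSpace.comap_mono ?_)
      (le_iSup (fun n => (sig (nameMap T f n)).comap T^[m]) (n + 1))
    rw [sig_nameMap_first]
    exact le_sup_right) C

lemma past_iterate_le_remote [MeasurableSpace ι] (T : X → X) (f : X → ι) (C : MeasurableSpace X)
    {m : ℕ} (hm : 1 ≤ m) : C ⊔ pastAlg T^[m] f ≤ remote T f C m :=
  sup_le_sup_left (iSup_le fun n =>
    (MeasurableSpace.comap_mono (sig_nameMap_iterate_le T f hm n)).trans
      (le_iSup (fun n => (sig (nameMap T f n)).comap T^[m]) (m * n))) C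

variable {C : MeasurableSpace X} {mX : MeasurableSpace X}
  {μ : Measure X} [IsProbabilityMeasure μ] {T : X → X}
  [Fintype ι] [MeasurableSpace ι] [MeasurableSingletonClass ι]
  [Fintype κ] [MeasurableSpace κ] [MeasurableSingletonClass κ]

lemma remote_le (hT : Measurable T) (hC : C ≤ mX) {f : X → ι} (hf : Measurable f) (m : ℕ) :
    remote T f C m ≤ mX :=
  sup_le hC (iSup_le fun n =>
    (MeasurableSpace.comap_mono (measurable_nameMap hT hf n).comap_le).trans
      (hT.iterate m).comap_le)

lemma tail_le_remote (f : X → ι) (m : ℕ) :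
    tailAlg μ (remote T f C) ≤ eventuallyMeasurableSpace (remote T f C m) (ae μ) :=
  fun _ hs => (measurableSet_tailAlg.1 hs).2 m

lemma le_tail (hC : C ≤ mX) (f : X → ι) : C ≤ tailAlg μ (remote T f C) := fun s hs =>
  measurableSet_tailAlg.2 ⟨hC s hs, fun _ =>
    (le_sup_left.trans le_eventuallyMeasurableSpace) s hs⟩

/-- The remote past is invariant, thanks to the measurable invertibility of `T`. -/
lemma comap_tail (hemb : MeasurableEmbedding T) (hbij : Function.Bijective T)
    (hT : MeasurePreserving T μ μ) (hCT : C.comap T = C) (f : X → ι) :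
    (tailAlg μ (remote T f C)).comap T = tailAlg μ (remote T f C) := by
  refine le_antisymm ?_ fun s hs => ?_
  · rintro _ ⟨s, hs, rfl⟩
    obtain ⟨hs1, hs2⟩ := measurableSet_tailAlg.1 hs
    refine measurableSet_tailAlg.2 ⟨hT.measurable hs1, fun n => ?_⟩
    obtain ⟨t, ht, hst⟩ := hs2 n
    refine ⟨T ⁻¹' t, antitone_remote T f C n.le_succ _ ?_,
      hT.quasiMeasurePreserving.preimage_ae_eq hst⟩
    rw [← comap_remote hCT]
    exact ⟨t, ht, rfl⟩
  · obtain ⟨hs1, hs2⟩ := measurableSet_tailAlg.1 hs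
    have hpre : T ⁻¹' (T '' s) = s := preimage_image_eq s hbij.1
    refine ⟨T '' s, measurableSet_tailAlg.2 ⟨hemb.measurableSet_image.2 hs1, fun n => ?_⟩, hpre⟩
    obtain ⟨t, ht, hst⟩ := hs2 (n + 1)
    change MeasurableSet[remote T f C (n + 1)] t at ht
    rw [← comap_remote hCT] at ht
    obtain ⟨t', ht', rfl⟩ := ht
    refine ⟨t', ht', ?_⟩
    have h1 : ∀ᵐ x ∂μ, (T x ∈ T '' s) = (T x ∈ t') := by
      filter_upwards [hst] with x hx
      have hx' : (x ∈ s) = (T x ∈ t') := hx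
      rw [← hx', ← mem_preimage, hpre]
    have h2 := (hemb.ae_map_iff (p := fun y => (y ∈ T '' s) = (y ∈ t'))).2 h1
    rw [hT.map_eq] at h2
    exact h2

/-- A partition `γ` measurable with respect to the remote past of `α` has zero entropy: the past
of `α` determines `γ`, so `h(α ∨ γ) ≤ h(α)`, while the names of `γ` give no more information on
`α` than the remote past does, so `h(α ∨ γ) ≥ h(γ) + h(α)`. -/
lemma rate_eq_zero_of_tail (hemb : MeasurableEmbedding T) (hbij : Function.Bijective T)
    (hT : MeasurePreserving T μ μ) (hC : C ≤ mX) (hCT : C.comap T = C)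
    {f : X → ι} (hf : Measurable f) {γ : X → κ} (hγ : Measurable γ)
    (h : sig γ ≤ tailAlg μ (remote T f C)) : rate μ T γ C = 0 := by
  have hD : tailAlg μ (remote T f C) ≤ mX := inf_le_left
  have hCD : C ≤ tailAlg μ (remote T f C) := le_tail hC f
  have hDT := comap_tail hemb hbij hT hCT f
  have hD1 := tail_le_remote (μ := μ) (T := T) (C := C) f 1
  rw [remote_one] at hD1
  have hpf := pastAlg_le hT.measurable hf
  have hγf := hγ.prodMk hf
  have hpγf := pastAlg_le hT.measurable hγf
  have hfD : rate μ T f C ≤ rate μ T f (tailAlg μ (remote T f C)) :=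
    funH_anti (sup_le hD hpf) (sup_le hC hpf)
      (sup_le hD1 (le_sup_right.trans le_eventuallyMeasurableSpace)) hf
  have hlow : rate μ T γ C + rate μ T f C ≤ rate μ T (fun x => (γ x, f x)) C := by
    refine le_of_tendsto_of_tendsto
      ((tendsto_rate hT hC hCT hγ).add_const (rate μ T f C)) (tendsto_rate hT hC hCT hγf)
      (eventually_atTop.2 ⟨1, fun n hn => ?_⟩)
    have hγn := measurable_nameMap hT.measurable hγ n
    have hfn := measurable_nameMap hT.measurable hf n
    have h1 : funH μ (nameMap T (fun x => (γ x, f x)) n) C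
        = funH μ (nameMap T γ n) C + funH μ (nameMap T f n) (C ⊔ sig (nameMap T γ n)) := by
      rw [← funH_prod hC hγn hfn]
      exact funH_congr hC (measurable_nameMap hT.measurable hγf n) (hγn.prodMk hfn)
        (by rw [sig_prod, sig_nameMap_prod])
    have h2 : funH μ (nameMap T f n) (tailAlg μ (remote T f C))
        ≤ funH μ (nameMap T f n) (C ⊔ sig (nameMap T γ n)) :=
      funH_anti' hD (sup_le hCD (sig_nameMap_le h hDT.le n)) hfn
    have h3 := mul_rate_le hT hD hDT hf n
    have hn' : (0 : ℝ) < n := by exact_mod_cast hn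
    have h4 : (n : ℝ) * rate μ T f C ≤ n * rate μ T f (tailAlg μ (remote T f C)) :=
      mul_le_mul_of_nonneg_left hfD hn'.le
    have h5 : (n : ℝ)⁻¹ * (funH μ (nameMap T γ n) C + n * rate μ T f C)
        ≤ (n : ℝ)⁻¹ * funH μ (nameMap T (fun x => (γ x, f x)) n) C :=
      mul_le_mul_of_nonneg_left (by linarith) (by positivity)
    refine le_trans (le_of_eq ?_) h5
    field_simp
  have hup : rate μ T (fun x => (γ x, f x)) C ≤ rate μ T f C := by
    have hG : C ⊔ pastAlg T (fun x => (γ x, f x)) ≤ mX := sup_le hC hpγf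
    have hfG : C ⊔ pastAlg T f ≤ C ⊔ pastAlg T (fun x => (γ x, f x)) :=
      sup_le_sup_left (iSup_mono fun n => MeasurableSpace.comap_mono (by
        rw [sig_nameMap_prod]
        exact le_sup_right)) C
    rw [rate, funH_prod hG hγ hf, funH_eq_zero hG (h.trans (hD1.trans (eventually_mono hfG))),
      zero_add]
    exact funH_anti' (sup_le hG hγ.comap_le) (hfG.trans le_sup_left) hf
  exact le_antisymm (by linarith) (rate_nonneg hT.measurable hC hγ)

lemma tail_le_relPinsker (hemb : MeasurableEmbedding T) (hbij : Function.Bijective T)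
    (hT : MeasurePreserving T μ μ) (hC : C ≤ mX) (hCT : C.comap T = C)
    {f : X → ι} (hf : Measurable f) : tailAlg μ (remote T f C) ≤ relPinsker μ T C := by
  intro s hs
  have hsX := (measurableSet_tailAlg.1 hs).1
  exact (measurableSet_relPinsker hT hC hCT).2 ⟨hsX,
    rate_eq_zero_of_tail hemb hbij hT hC hCT hf (measurable_ind hsX) (sig_ind_le hs)⟩

/-- The entropies of the powers of `T` are squeezed between the entropy given the remote past and
the entropy given the relative Pinsker algebra; the former converge to the latter. -/
lemma tendsto_rate_iterate (hemb : MeasurableEmbedding T) (hbij : Function.Bijective T)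
    (hT : MeasurePreserving T μ μ) (hC : C ≤ mX) (hCT : C.comap T = C)
    {f : X → ι} (hf : Measurable f) :
    Tendsto (fun m : ℕ => rate μ T^[m] f C) atTop (𝓝 (funH μ f (relPinsker μ T C))) := by
  have hlim : Tendsto (fun m => funH μ f (remote T f C m)) atTop
      (𝓝 (funH μ f (tailAlg μ (remote T f C)))) :=
    tendsto_finsetSum _ fun i _ =>
      tendsto_setH_tailAlg (remote_le hT.measurable hC hf) (antitone_remote T f C) (fib hf i)
  have hlow : ∀ m, 1 ≤ m → funH μ f (remote T f C m) ≤ rate μ T^[m] f C := fun m hm =>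
    funH_anti' (remote_le hT.measurable hC hf m) (past_iterate_le_remote T f C hm) hf
  have hup : ∀ m, 1 ≤ m → rate μ T^[m] f C ≤ funH μ f (relPinsker μ T C) := fun m hm =>
    rate_iterate_le_relPinsker hT hC hCT hf hm
  have heq : funH μ f (tailAlg μ (remote T f C)) = funH μ f (relPinsker μ T C) :=
    le_antisymm
      (le_of_tendsto hlim (eventually_atTop.2 ⟨1, fun m hm => (hlow m hm).trans (hup m hm)⟩))
      (funH_anti' (relPinsker_le hT hC hCT) (tail_le_relPinsker hemb hbij hT hC hCT hf) hf)
  rw [heq] at hlim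
  exact tendsto_of_tendsto_of_tendsto_of_le_of_le' hlim tendsto_const_nhds
    (eventually_atTop.2 ⟨1, hlow⟩) (eventually_atTop.2 ⟨1, hup⟩)

end RemotePast

/-- **Lemma (convergence of `h_μ(T^m, α | π⁻¹A)` to conditional entropy given the relative
Pinsker σ-algebra).** Let `π : (X,B,μ,T) → (Z,A,λ,R)` be a factor map between invertible
Lebesgue systems and `P_μ(π)` the relative Pinsker σ-algebra. Then for every finite
measurable partition `α` of `X`, `lim_{m→∞} h_μ(T^m, α | π⁻¹(A)) = H_μ(α | P_μ(π))`. -/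
theorem hPartCond_pow_tendsto_condH_relPinsker
    {X Z : Type*}
    [mX : MeasurableSpace X] [StandardBorelSpace X]
    [mZ : MeasurableSpace Z] [StandardBorelSpace Z]
    (μ : Measure X) (lam : Measure Z)
    [IsProbabilityMeasure μ] [IsProbabilityMeasure lam]
    (T : X → X) (R : Z → Z)
    (hTbij : Function.Bijective T) (hRbij : Function.Bijective R)
    (hT : MeasurePreserving T μ μ) (hR : MeasurePreserving R lam lam)
    (π : X → Z) (hπ : MeasurePreserving π μ lam) (hπT : π ∘ T = R ∘ π)
    (α : FinPart X mX) :
    Tendsto (fun m : ℕ => hPartCond μ (T^[m]) α.atom (MeasurableSpace.comap π mZ)) atTop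
      (𝓝 (condH μ α.atom (relPinsker μ T (MeasurableSpace.comap π mZ)))) := by
  have hTe : MeasurableEmbedding T := hT.measurable.measurableEmbedding hTbij.1
  have hRe : MeasurableEmbedding R := hR.measurable.measurableEmbedding hRbij.1
  have hC : MeasurableSpace.comap π mZ ≤ mX := hπ.measurable.comap_le
  have hCT : (MeasurableSpace.comap π mZ).comap T = MeasurableSpace.comap π mZ := by
    rw [MeasurableSpace.comap_comp, hπT, ← MeasurableSpace.comap_comp, hRe.comap_eq]
  obtain ⟨a, ha, e⟩ := exists_fun_of_finPart α
  rw [e]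
  refine (tendsto_rate_iterate hTe hTbij hT hC hCT ha).congr fun m => ?_
  exact (hPartCond_eq_rate (hT.iterate m) hC (comap_iterate hCT m) ha).symm
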